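/- Let d > 0 and let σ ∈ [0, π], δ ∈ [0, π]. If d_LR(d,σ,δ) < 2 and d_RL(d,σ,δ) ≥ 2, then δ > π/2. Moreover, if α, β are angles with 0 ≤ α ≤ π and α ≤ β ≤ 2π − α such that √((d + sin β + sin α)² + (cos β + cos α)²) < 2 and √((d − sin β − sin α)² + (cos β + cos α)²) ≥ 2, then 0 ≤ α ≤ π/2 and π + α < β < 2π − α. -/

import Mathlib

open Real

/-- Distance between the center of the left starting disk and the right final disk,
in `(σ, δ)` coordinates. -/
noncomputable def dLR (d σ δ : ℝ) : ℝ :=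
  Real.sqrt (d ^ 2 + 4 * d * Real.cos δ * Real.sin σ + 4 * Real.cos δ ^ 2)

/-- Distance between the center of the right starting disk and the left final disk,
in `(σ, δ)` coordinates. -/
noncomputable def dRL (d σ δ : ℝ) : ℝ :=
  Real.sqrt (d ^ 2 - 4 * d * Real.cos δ * Real.sin σ + 4 * Real.cos δ ^ 2)

/-- For `d > 0`: if `σ, δ ∈ [0, π]`, `d_LR < 2` and `d_RL ≥ 2`,
then `δ > π/2`.  Moreover, for angles `0 ≤ α ≤ π`, `α ≤ β ≤ 2π - α` with the
corresponding distance conditions, one has `0 ≤ α ≤ π/2` and `π + α < β < 2π - α`. -/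
theorem case_b_basics (d : ℝ) (hd : 0 < d) :
    (∀ σ δ : ℝ, σ ∈ Set.Icc 0 π → δ ∈ Set.Icc 0 π →
      dLR d σ δ < 2 → 2 ≤ dRL d σ δ → π / 2 < δ) ∧
    (∀ α β : ℝ, 0 ≤ α → α ≤ π → α ≤ β → β ≤ 2 * π - α →
      Real.sqrt ((d + Real.sin β + Real.sin α) ^ 2 + (Real.cos β + Real.cos α) ^ 2) < 2 →
      2 ≤ Real.sqrt ((d - Real.sin β - Real.sin α) ^ 2 + (Real.cos β + Real.cos α) ^ 2) →
      0 ≤ α ∧ α ≤ π / 2 ∧ π + α < β ∧ β < 2 * π - α) := by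
  constructor
  · intro σ δ hσ hδ h1 h2
    by_contra hc
    have hc' : δ ≤ π / 2 := not_lt.mp hc
    have h3 : 0 ≤ Real.cos δ :=
      Real.cos_nonneg_of_neg_pi_div_two_le_of_le (by linarith [hδ.1, Real.pi_pos]) hc'
    have h4 : 0 ≤ Real.sin σ := Real.sin_nonneg_of_nonneg_of_le_pi hσ.1 hσ.2
    have h5 : dRL d σ δ ≤ dLR d σ δ := by
      unfold dRL dLR
      apply Real.sqrt_le_sqrt
      have : 0 ≤ d * Real.cos δ * Real.sin σ := by positivity
      linarith
    linarith
  · intro α β h0 h1 h2 h3 h4 h5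
    have h7 := lt_of_not_ge (fun h => absurd (Real.sqrt_le_sqrt h) (not_le.mpr (lt_of_lt_of_le h4 h5)))
    have h8 : Real.sin β + Real.sin α < 0 := by
      by_contra hc
      have := mul_nonneg hd.le (not_lt.mp hc)
      nlinarith
    have e : Real.sin β + Real.sin α =
        2 * (Real.sin ((β + α) / 2) * Real.cos ((β - α) / 2)) := by
      have a1 : Real.sin β = Real.sin ((β + α) / 2 + (β - α) / 2) := by ring_nf
      have a2 : Real.sin α = Real.sin ((β + α) / 2 - (β - α) / 2) := by ring_nf
      rw [a1, a2, Real.sin_add, Real.sin_sub]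
      ring
    rw [e] at h8
    have h9 : 0 ≤ Real.sin ((β + α) / 2) :=
      Real.sin_nonneg_of_nonneg_of_le_pi (by linarith) (by linarith)
    have h10 : π + α < β := by
      by_contra hc
      have : 0 ≤ Real.cos ((β - α) / 2) :=
        Real.cos_nonneg_of_neg_pi_div_two_le_of_le (by linarith [Real.pi_pos])
          (by linarith [not_lt.mp hc])
      have := mul_nonneg h9 this
      linarith
    have h11 : β < 2 * π - α := by
      rcases lt_or_eq_of_le h3 with h | h
      · exact h
      · exfalso
        have : (β + α) / 2 = π := by linarith
        rw [this, Real.sin_pi] at h8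
        linarith
    exact ⟨h0, by linarith, h10, h11⟩
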